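/- There exists N such that for every prime p ≥ N, the congruence H_{p−1}(1) + (1/3) p² H_{p−1}(2,1) − (1/6) p⁴ H_{p−1}(4,1) − (1/9) p⁵ H_{p−1}(4,1,1) ≡ 0 (mod p⁶) holds; that is, the p-adic valuation of the left-hand side is at least 6. -/

import Mathlib

/-- The multiple harmonic sum `H_n(s₁,…,s_k) = ∑_{n ≥ n₁ > … > n_k ≥ 1} 1/(n₁^{s₁} ⋯ n_k^{s_k})`,
with `H_n(∅) = 1`. -/
def MHS : ℕ → List ℕ → ℚ
  | _, [] => 1
  | n, s :: t => ∑ m ∈ Finset.Icc 1 n, (1 / (m : ℚ) ^ s) * MHS (m - 1) t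

/-!
Multiplying `H_{p-1}(s₁,…,s_k)` by `p ^ (s₁ + ⋯ + s_k)` replaces `1 / m` by `p / m`; after
multiplication by `18 p` the congruence becomes a linear relation modulo `p ^ 7` between such scaled
sums. Those of depth two are governed by double shuffle relations: the product of two single sums
gives the stuffle relation, while the partial fraction identity
`(p / m) (p / n) = (p / (m + n)) (p / m + p / n)`, summed over `m + n < p`, gives a shuffle relation
once `(p / (p - n)) ^ s` is expanded as a power series in `p / n`. Sums of shape `H(s,1,…,1)` come
from `∏_{j ≤ k} (1 - p / j) = (-1) ^ k C(p-1, k)`: the binomial transform turns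
`∑_i (-1) ^ i H(s,{1}^i)` into complete symmetric polynomials in the `p / m`. Since `p ^ (s + 1)`
divides the scaled single sum of exponent `s`, every sum in the relation becomes a combination of
`H(2)`, `H(2) ^ 2` and `H(4)`, and these combinations cancel.
-/

open Finset

section Sums

lemma sum_range_sum_range_sub_eq_reflect {M : Type*} [AddCommMonoid M] (n : ℕ) (f : ℕ → ℕ → M) :
    ∑ k ∈ range n, ∑ l ∈ range k, f (k - l) (l + 1)
      = ∑ k ∈ range n, ∑ l ∈ range k, f (l + 1) (n - k) := by
  rw [sum_sigma', sum_sigma']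
  refine sum_nbij' (fun q => ⟨n - 1 - q.2, q.1 - q.2 - 1⟩)
    (fun q => ⟨n - 1 - q.1 + q.2 + 1, n - 1 - q.1⟩) ?_ ?_ ?_ ?_ ?_ <;>
    simp only [mem_sigma, mem_range, Sigma.forall, Sigma.mk.injEq, heq_eq_eq]
  · lia
  · lia
  · lia
  · lia
  · intro k l h
    congr 1 <;> lia

lemma sum_range_natCast_zmod {M : Type*} [AddCommMonoid M] (n : ℕ) [NeZero n] (f : ZMod n → M) :
    ∑ k ∈ range n, f k = ∑ x, f x :=
  sum_nbij' (fun k => (k : ZMod n)) ZMod.val (fun _ _ => mem_univ _)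
    (fun x _ => mem_range.mpr x.val_lt) (fun _ hk => ZMod.val_cast_of_lt (mem_range.mp hk))
    (fun x _ => ZMod.natCast_zmod_val x) fun _ _ => rfl

end Sums

section CommSemiring

variable {R : Type*} [CommSemiring R]

/-- The multiple harmonic sum of a sequence `x`: `MHS` with `x m` in place of `1 / m`. The summation
index is shifted by one to avoid truncated subtraction. -/
def mhs (x : ℕ → R) : ℕ → List ℕ → R
  | _, [] => 1
  | n, s :: w => ∑ k ∈ range n, x (k + 1) ^ s * mhs x k w

lemma mhs_nil (x : ℕ → R) (n : ℕ) : mhs x n [] = 1 := by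
  simp only [mhs]

lemma mhs_cons (x : ℕ → R) (n s : ℕ) (w : List ℕ) :
    mhs x n (s :: w) = ∑ k ∈ range n, x (k + 1) ^ s * mhs x k w := by
  simp only [mhs]

lemma mhs_zero_cons (x : ℕ → R) (s : ℕ) (w : List ℕ) : mhs x 0 (s :: w) = 0 := by
  rw [mhs_cons, sum_range_zero]

lemma mhs_succ_cons (x : ℕ → R) (n s : ℕ) (w : List ℕ) :
    mhs x (n + 1) (s :: w) = mhs x n (s :: w) + x (n + 1) ^ s * mhs x n w := by
  rw [mhs_cons, sum_range_succ, ← mhs_cons]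

lemma mhs_singleton (x : ℕ → R) (n s : ℕ) : mhs x n [s] = ∑ k ∈ range n, x (k + 1) ^ s := by
  simp only [mhs_cons, mhs_nil, mul_one]

lemma mhs_pair (x : ℕ → R) (n a b : ℕ) :
    mhs x n [a, b] = ∑ k ∈ range n, ∑ l ∈ range k, x (k + 1) ^ a * x (l + 1) ^ b := by
  simp only [mhs_cons x n, mhs_singleton, mul_sum]

lemma mhs_pair_eq_sum_reflect (x : ℕ → R) (n a b : ℕ) :
    mhs x n [a, b] = ∑ k ∈ range n, ∑ l ∈ range k, x (k + 1) ^ a * x (k - l) ^ b := by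
  rw [mhs_pair]
  refine sum_congr rfl fun k _ => ?_
  rw [← sum_range_reflect]
  refine sum_congr rfl fun l hl => ?_
  have hlk : l < k := mem_range.mp hl
  rw [show k - 1 - l + 1 = k - l by lia]

lemma mhs_congr {x y : ℕ → R} {n : ℕ} (h : ∀ m, 0 < m → m ≤ n → x m = y m) (w : List ℕ) :
    mhs x n w = mhs y n w := by
  induction w generalizing n with
  | nil => simp only [mhs_nil]
  | cons s w ih =>
    simp only [mhs_cons]
    refine sum_congr rfl fun k hk => ?_
    have hkn : k + 1 ≤ n := mem_range.mp hk
    rw [h (k + 1) k.succ_pos hkn, ih fun m hm hmk => h m hm (by lia)]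

lemma mhs_const_mul (c : R) (x : ℕ → R) (n : ℕ) (w : List ℕ) :
    mhs (fun m => c * x m) n w = c ^ w.sum * mhs x n w := by
  induction w generalizing n with
  | nil => simp only [mhs_nil, List.sum_nil, pow_zero, mul_one]
  | cons s w ih =>
    simp only [mhs_cons, List.sum_cons, mul_sum, ih]
    exact sum_congr rfl fun k _ => by ring

lemma map_mhs {S : Type*} [CommSemiring S] (f : R →+* S) (x : ℕ → R) (n : ℕ) (w : List ℕ) :
    f (mhs x n w) = mhs (fun m => f (x m)) n w := by
  induction w generalizing n with
  | nil => simp only [mhs_nil, map_one]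
  | cons s w ih => simp only [mhs_cons, map_sum, map_mul, map_pow, ih]

lemma mhs_mul_mhs (x : ℕ → R) (n a b : ℕ) :
    mhs x n [a] * mhs x n [b] = mhs x n [a, b] + mhs x n [b, a] + mhs x n [a + b] := by
  induction n with
  | zero => simp only [mhs_zero_cons, mul_zero, add_zero]
  | succ n ih =>
    simp only [mhs_succ_cons, mhs_nil, mul_one]
    rw [add_mul, mul_add, ih]
    ring

lemma pow_succ_mul_eq_sum_antidiagonal {s x y : R} (h : x * y = s * (x + y)) (a : ℕ) :
    x ^ (a + 1) * y = ∑ q ∈ antidiagonal a,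
      s ^ (q.1 + 1) * (q.1.choose a * y ^ (q.2 + 1) + x ^ (q.2 + 1)) := by
  induction a with
  | zero => simpa [add_comm] using h
  | succ a ih =>
    have hvanish : ∀ q ∈ antidiagonal a, ((q.1.choose (a + 1) : ℕ) : R) = 0 := fun q hq => by
      rw [Nat.choose_eq_zero_of_lt (by have := mem_antidiagonal.mp hq; lia), Nat.cast_zero]
    calc x ^ (a + 1 + 1) * y = s * x ^ (a + 1 + 1) + s * (x ^ (a + 1) * y) := by
          rw [pow_succ _ (a + 1), mul_assoc, h]
          ring
      _ = _ := by
          rw [ih, mul_sum, Nat.sum_antidiagonal_succ, Nat.choose_zero_succ]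
          congr 1
          · push_cast; ring
          · refine sum_congr rfl fun q hq => ?_
            rw [Nat.choose_succ_succ, Nat.cast_add, hvanish q hq]
            ring

lemma pow_mul_pow_eq_sum_antidiagonal {s x y : R} (h : x * y = s * (x + y)) (a b : ℕ) :
    x ^ (a + 1) * y ^ (b + 1) = ∑ q ∈ antidiagonal (a + b),
      s ^ (q.1 + 1) * (q.1.choose a * y ^ (q.2 + 1) + q.1.choose b * x ^ (q.2 + 1)) := by
  induction a generalizing b with
  | zero =>
    have hswap : y * x = s * (y + x) := by rw [mul_comm, h, add_comm]
    simpa [mul_comm, add_comm] using pow_succ_mul_eq_sum_antidiagonal hswap b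
  | succ a iha =>
    induction b with
    | zero => simpa using pow_succ_mul_eq_sum_antidiagonal h (a + 1)
    | succ b ihb =>
      calc x ^ (a + 1 + 1) * y ^ (b + 1 + 1)
          = s * (x ^ (a + 1 + 1) * y ^ (b + 1)) + s * (x ^ (a + 1) * y ^ (b + 1 + 1)) := by
            rw [pow_succ _ (a + 1), pow_succ _ (b + 1), mul_mul_mul_comm, h]
            ring
        _ = _ := by
            rw [ihb, iha, mul_sum, mul_sum, show a + 1 + (b + 1) = a + (b + 1) + 1 by ring,
              show a + 1 + b = a + (b + 1) by ring, ← sum_add_distrib, Nat.sum_antidiagonal_succ]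
            simp only [Nat.choose_zero_succ, Nat.choose_succ_succ, Nat.cast_zero, Nat.cast_add,
              zero_mul, add_zero, mul_zero, zero_add]
            exact sum_congr rfl fun q _ => by ring

/-- The complete homogeneous symmetric polynomial of degree `s` evaluated at `x 1, …, x n`. -/
def completeSum (x : ℕ → R) : ℕ → ℕ → R
  | 0, _ => 1
  | s + 1, n => ∑ k ∈ range n, x (k + 1) * completeSum x s (k + 1)

lemma completeSum_zero (x : ℕ → R) (n : ℕ) : completeSum x 0 n = 1 := by
  simp only [completeSum]

lemma completeSum_succ (x : ℕ → R) (s n : ℕ) :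
    completeSum x (s + 1) n = ∑ k ∈ range n, x (k + 1) * completeSum x s (k + 1) := by
  simp only [completeSum]

lemma completeSum_succ_zero (x : ℕ → R) (s : ℕ) : completeSum x (s + 1) 0 = 0 := by
  rw [completeSum_succ, sum_range_zero]

lemma completeSum_succ_succ (x : ℕ → R) (s n : ℕ) :
    completeSum x (s + 1) (n + 1)
      = completeSum x (s + 1) n + x (n + 1) * completeSum x s (n + 1) := by
  rw [completeSum_succ, sum_range_succ, ← completeSum_succ]

lemma completeSum_const_mul (c : R) (x : ℕ → R) (s n : ℕ) :
    completeSum (fun m => c * x m) s n = c ^ s * completeSum x s n := by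
  induction s generalizing n with
  | zero => simp only [completeSum_zero, pow_zero, mul_one]
  | succ s ih =>
    simp only [completeSum_succ, mul_sum, ih]
    exact sum_congr rfl fun k _ => by ring

lemma completeSum_one (x : ℕ → R) (n : ℕ) : completeSum x 1 n = mhs x n [1] := by
  simp only [completeSum_succ, completeSum_zero, mul_one, mhs_singleton, pow_one]

end CommSemiring

section CommRing

variable {R : Type*} [CommRing R]

lemma one_sub_mul_sum_add_choose_mul_pow (x : R) (b N : ℕ) :
    (1 - x) * ∑ k ∈ range N, (b + 1 + k).choose (b + 1) * x ^ k
      = ∑ k ∈ range N, (b + k).choose b * x ^ k - (b + N).choose (b + 1) * x ^ N := by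
  induction N with
  | zero => simp
  | succ N ih =>
    have hPascal : (b + 1 + N).choose (b + 1) = (b + N).choose b + (b + N).choose (b + 1) := by
      rw [add_right_comm, Nat.choose_succ_succ]
    rw [sum_range_succ, sum_range_succ, mul_add, ih, hPascal, ← add_assoc, add_right_comm b N 1,
      hPascal]
    push_cast
    ring

lemma one_sub_pow_mul_sum_add_choose_mul_pow {x : R} {N : ℕ} (hx : x ^ N = 0) (b : ℕ) :
    (1 - x) ^ (b + 1) * ∑ k ∈ range N, (b + k).choose b * x ^ k = 1 := by
  induction b with
  | zero => simp [mul_neg_geom_sum, hx]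
  | succ b ih =>
    rw [pow_succ, mul_assoc, one_sub_mul_sum_add_choose_mul_pow, hx, mul_zero, sub_zero, ih]

lemma pow_eq_sum_choose_mul_pow {x y : R} {N : ℕ} (h : x + y = x * y) (hx : x ^ N = 0) (b : ℕ) :
    y ^ (b + 1) = (-1) ^ (b + 1) * ∑ k ∈ range N, (b + k).choose b * x ^ (b + 1 + k) := by
  have hy : y * (1 - x) = -x := by linear_combination h
  calc y ^ (b + 1)
      = (y * (1 - x)) ^ (b + 1) * ∑ k ∈ range N, (b + k).choose b * x ^ k := by
        rw [mul_pow, mul_assoc, one_sub_pow_mul_sum_add_choose_mul_pow hx, mul_one]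
    _ = _ := by
        rw [hy, neg_pow, mul_assoc, mul_sum]
        congr 1
        exact sum_congr rfl fun k _ => by ring

lemma two_mul_completeSum_two (x : ℕ → R) (n : ℕ) :
    2 * completeSum x 2 n = mhs x n [1] ^ 2 + mhs x n [2] := by
  induction n with
  | zero => simp [completeSum_succ_zero, mhs_zero_cons]
  | succ n ih =>
    simp only [completeSum_succ_succ x 1, completeSum_one, mhs_succ_cons, mhs_nil]
    linear_combination ih

lemma six_mul_completeSum_three (x : ℕ → R) (n : ℕ) :
    6 * completeSum x 3 n = mhs x n [1] ^ 3 + 3 * mhs x n [1] * mhs x n [2] + 2 * mhs x n [3] := by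
  induction n with
  | zero => simp [completeSum_succ_zero, mhs_zero_cons]
  | succ n ih =>
    have h2 := two_mul_completeSum_two x (n + 1)
    simp only [completeSum_succ_succ x 2, mhs_succ_cons, mhs_nil] at h2 ⊢
    linear_combination ih + 3 * x (n + 1) * h2

lemma mul_choose_eq_mul_succ_choose_succ {a b : R} {n k : ℕ} (ha : (n + 1) * a = 1)
    (hb : (k + 1) * b = 1) : b * n.choose k = a * (n + 1).choose (k + 1) := by
  have h : ((n : R) + 1) * n.choose k = (n + 1).choose (k + 1) * (k + 1) := by
    exact_mod_cast congrArg (Nat.cast (R := R)) (Nat.add_one_mul_choose_eq n k)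
  linear_combination a * b * h - b * n.choose k * ha + a * (n + 1).choose (k + 1) * hb

lemma sum_alternating_choose_mul_pow_succ {x : ℕ → R} {n : ℕ}
    (hx : ∀ m ≤ n, (m + 1) * x (m + 1) = 1) (s : ℕ) :
    ∑ k ∈ range (n + 1), (-1) ^ k * (n + 1).choose (k + 1) * x (k + 1) ^ (s + 1)
      = ∑ k ∈ range n, (-1) ^ k * n.choose (k + 1) * x (k + 1) ^ (s + 1)
        + x (n + 1) * ∑ k ∈ range (n + 1), (-1) ^ k * (n + 1).choose (k + 1) * x (k + 1) ^ s := by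
  have hlast : ∑ k ∈ range n, (-1) ^ k * n.choose (k + 1) * x (k + 1) ^ (s + 1)
      = ∑ k ∈ range (n + 1), (-1) ^ k * n.choose (k + 1) * x (k + 1) ^ (s + 1) := by
    rw [sum_range_succ, Nat.choose_succ_self, Nat.cast_zero, mul_zero, zero_mul, add_zero]
  rw [hlast, mul_sum, ← sum_add_distrib]
  refine sum_congr rfl fun k hk => ?_
  have hkn : k ≤ n := Nat.lt_succ_iff.mp (mem_range.mp hk)
  have habsorb := mul_choose_eq_mul_succ_choose_succ (hx n le_rfl) (hx k hkn)
  have hPascal : ((n + 1).choose (k + 1) : R) = n.choose k + n.choose (k + 1) := by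
    rw [Nat.choose_succ_succ, Nat.cast_add]
  linear_combination (-1) ^ k * x (k + 1) ^ (s + 1) * hPascal + (-1) ^ k * x (k + 1) ^ s * habsorb

lemma sum_alternating_choose_mul_pow {x : ℕ → R} {n : ℕ} (hn : n ≠ 0)
    (hx : ∀ m < n, (m + 1) * x (m + 1) = 1) (s : ℕ) :
    ∑ k ∈ range n, (-1) ^ k * n.choose (k + 1) * x (k + 1) ^ s = completeSum x s n := by
  induction s generalizing n with
  | zero =>
    have h := congrArg (Int.cast : ℤ → R) (Int.alternating_sum_range_choose_of_ne hn)
    rw [sum_range_succ'] at h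
    push_cast at h
    simp only [pow_succ, mul_neg, mul_one, neg_mul, sum_neg_distrib,
      Nat.choose_zero_right, Nat.cast_one] at h
    simp only [pow_zero, mul_one, completeSum_zero]
    linear_combination -h
  | succ s ihs =>
    clear hn
    induction n with
    | zero => simp [completeSum_succ_zero]
    | succ n ihn =>
      rw [sum_alternating_choose_mul_pow_succ fun m hm => hx m (Nat.lt_succ_of_le hm),
        ihn fun m hm => hx m (hm.trans n.lt_succ_self), ihs n.succ_ne_zero hx,
        completeSum_succ_succ]

lemma prod_one_sub_eq_sum_mhs {x : ℕ → R} {N : ℕ}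
    (hN : ∀ n, mhs x n (List.replicate (N + 1) 1) = 0) (n : ℕ) :
    ∏ k ∈ range n, (1 - x (k + 1))
      = ∑ i ∈ range (N + 1), (-1) ^ i * mhs x n (List.replicate i 1) := by
  induction n with
  | zero => simp [sum_range_succ', List.replicate_succ, mhs_zero_cons, mhs_nil]
  | succ n ih =>
    have htop : x (n + 1) * mhs x n (List.replicate N 1) = 0 := by
      have h := hN (n + 1)
      rwa [List.replicate_succ, mhs_succ_cons, ← List.replicate_succ, hN, zero_add, pow_one] at h
    have hsplit : ∑ i ∈ range (N + 1), (-1) ^ i * mhs x (n + 1) (List.replicate i 1)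
        = ∑ i ∈ range (N + 1), (-1) ^ i * mhs x n (List.replicate i 1)
          - x (n + 1) * ∑ i ∈ range N, (-1) ^ i * mhs x n (List.replicate i 1) := by
      rw [sum_range_succ', sum_range_succ' _ N, mul_sum]
      simp only [List.replicate_succ, List.replicate_zero, mhs_succ_cons, mhs_nil, mul_add,
        sum_add_distrib, pow_succ]
      simp only [pow_zero, one_mul, mul_one, mul_neg, neg_mul, sum_neg_distrib]
      rw [sum_congr rfl fun i _ => mul_left_comm (x (n + 1)) _ _]
      ring
    rw [prod_range_succ, ih, hsplit]
    rw [sum_range_succ _ N]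
    linear_combination -(-1) ^ N * htop

end CommRing

section ZModPrimePow

/-- The quotient `p / m` in `ZMod (p ^ N)`, for `m` prime to `p`. -/
def primeDiv (p N m : ℕ) : ZMod (p ^ N) :=
  p * (m : ZMod (p ^ N))⁻¹

/-- The integral multiple `p ^ (s₁ + ⋯ + s_k) H_{p-1}(s₁,…,s_k)` of a multiple harmonic sum, modulo
`p ^ N`. -/
def scaledMHS (p N : ℕ) (w : List ℕ) : ZMod (p ^ N) :=
  mhs (primeDiv p N) (p - 1) w

variable {p N : ℕ}

lemma natCast_self_pow_eq_zero {s : ℕ} (hs : N ≤ s) : (p : ZMod (p ^ N)) ^ s = 0 := by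
  rw [← Nat.cast_pow, ZMod.natCast_eq_zero_iff]
  exact pow_dvd_pow p hs

lemma mul_eq_zero_of_pow_dvd {i j : ℕ} (hij : N ≤ i + j) {a b : ZMod (p ^ N)}
    (ha : (p : ZMod (p ^ N)) ^ i ∣ a) (hb : (p : ZMod (p ^ N)) ^ j ∣ b) : a * b = 0 := by
  rw [← zero_dvd_iff, ← natCast_self_pow_eq_zero hij, pow_add]
  exact mul_dvd_mul ha hb

lemma primeDiv_pow_eq_zero (m : ℕ) : primeDiv p N m ^ N = 0 := by
  rw [primeDiv, mul_pow, natCast_self_pow_eq_zero le_rfl, zero_mul]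

lemma scaledMHS_eq_pow_mul (w : List ℕ) :
    scaledMHS p N w = p ^ w.sum * mhs (fun m => (m : ZMod (p ^ N))⁻¹) (p - 1) w :=
  mhs_const_mul _ _ _ _

lemma scaledMHS_eq_zero_of_le_sum {w : List ℕ} (hw : N ≤ w.sum) : scaledMHS p N w = 0 := by
  rw [scaledMHS_eq_pow_mul, natCast_self_pow_eq_zero hw, zero_mul]

lemma scaledMHS_mul_scaledMHS (a b : ℕ) : scaledMHS p N [a] * scaledMHS p N [b]
    = scaledMHS p N [a, b] + scaledMHS p N [b, a] + scaledMHS p N [a + b] :=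
  mhs_mul_mhs _ _ a b

lemma sum_alternating_scaledMHS_cons_replicate (s : ℕ) :
    ∑ i ∈ range (N + 1), (-1) ^ i * scaledMHS p N (s :: List.replicate i 1)
      = ∑ k ∈ range (p - 1),
        primeDiv p N (k + 1) ^ s * ∏ j ∈ range k, (1 - primeDiv p N (j + 1)) := by
  have hvanish (n : ℕ) : mhs (primeDiv p N) n (List.replicate (N + 1) 1) = 0 := by
    have h := mhs_const_mul (p : ZMod (p ^ N)) (fun m => (m : ZMod (p ^ N))⁻¹) n
      (List.replicate (N + 1) 1)
    rw [natCast_self_pow_eq_zero (by simp), zero_mul] at h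
    exact h
  simp only [scaledMHS, mhs_cons, mul_sum]
  rw [sum_comm]
  refine sum_congr rfl fun k _ => ?_
  rw [prod_one_sub_eq_sum_mhs hvanish, mul_sum]
  exact sum_congr rfl fun i _ => mul_left_comm _ _ _

variable [Fact p.Prime]

lemma natCast_mul_inv_eq_one {m : ℕ} (hm : 0 < m) (hmp : m < p) :
    (m : ZMod (p ^ N)) * (m : ZMod (p ^ N))⁻¹ = 1 :=
  ZMod.coe_mul_inv_eq_one m
    ((Nat.coprime_of_lt_prime hm.ne' hmp Fact.out).symm.pow_right N)

lemma natCast_mul_primeDiv {m : ℕ} (hm : 0 < m) (hmp : m < p) :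
    (m : ZMod (p ^ N)) * primeDiv p N m = p := by
  rw [primeDiv, mul_left_comm, natCast_mul_inv_eq_one hm hmp, mul_one]

lemma eq_of_natCast_mul_eq {c : ℕ} (hc : 0 < c) (hcp : c < p) {x y : ZMod (p ^ N)}
    (h : c * x = c * y) : x = y := by
  linear_combination (c : ZMod (p ^ N))⁻¹ * h - (x - y) * natCast_mul_inv_eq_one (N := N) hc hcp

lemma dvd_of_dvd_natCast_mul {c : ℕ} (hc : 0 < c) (hcp : c < p) {d x : ZMod (p ^ N)}
    (h : d ∣ c * x) : d ∣ x := by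
  obtain ⟨y, hy⟩ := h
  refine ⟨(c : ZMod (p ^ N))⁻¹ * y, eq_of_natCast_mul_eq hc hcp ?_⟩
  linear_combination hy - d * y * natCast_mul_inv_eq_one (N := N) hc hcp

lemma primeDiv_mul_primeDiv {m n : ℕ} (hm : 0 < m) (hn : 0 < n) (hmn : m + n < p) :
    primeDiv p N m * primeDiv p N n
      = primeDiv p N (m + n) * (primeDiv p N m + primeDiv p N n) := by
  have hmp : m < p := by lia
  have hnp : n < p := by lia
  have h₁ := natCast_mul_primeDiv (N := N) hm hmp
  have h₂ := natCast_mul_primeDiv (N := N) hn hnp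
  have h₃ := natCast_mul_primeDiv (N := N) (add_pos hm hn) hmn
  push_cast at h₃
  apply eq_of_natCast_mul_eq hm hmp
  apply eq_of_natCast_mul_eq hn hnp
  linear_combination (n * primeDiv p N n - n * primeDiv p N (m + n)) * h₁
    + (p - m * primeDiv p N (m + n)) * h₂ - p * h₃

lemma primeDiv_add_primeDiv_sub {m : ℕ} (hm : 0 < m) (hmp : m < p) :
    primeDiv p N m + primeDiv p N (p - m) = primeDiv p N m * primeDiv p N (p - m) := by
  have hsub : 0 < p - m := Nat.sub_pos_of_lt hmp
  have hsubp : p - m < p := Nat.sub_lt (hm.trans hmp) hm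
  have h₁ := natCast_mul_primeDiv (N := N) hm hmp
  have h₂ := natCast_mul_primeDiv (N := N) hsub hsubp
  apply eq_of_natCast_mul_eq hm hmp
  apply eq_of_natCast_mul_eq hsub hsubp
  rw [Nat.cast_sub hmp.le] at h₂ ⊢
  linear_combination (p - m - (p - m) * primeDiv p N (p - m)) * h₁ + (m - p) * h₂

lemma primeDiv_sub_pow_eq_sum {m : ℕ} (hm : 0 < m) (hmp : m < p) (s : ℕ) :
    primeDiv p N (p - m) ^ (s + 1)
      = (-1) ^ (s + 1) * ∑ k ∈ range N, (s + k).choose s * primeDiv p N m ^ (s + 1 + k) :=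
  pow_eq_sum_choose_mul_pow (primeDiv_add_primeDiv_sub hm hmp) (primeDiv_pow_eq_zero m) s

lemma scaledMHS_eq_sum_reflect (s : ℕ) : scaledMHS p N [s + 1]
    = (-1) ^ (s + 1) * ∑ k ∈ range N, (s + k).choose s * scaledMHS p N [s + 1 + k] := by
  have hrev : scaledMHS p N [s + 1]
      = ∑ l ∈ range (p - 1), primeDiv p N (p - (l + 1)) ^ (s + 1) := by
    rw [scaledMHS, mhs_singleton, ← sum_range_reflect]
    refine sum_congr rfl fun l hl => ?_
    have hlp : l < p - 1 := mem_range.mp hl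
    rw [show p - 1 - 1 - l + 1 = p - (l + 1) by lia]
  rw [hrev]
  simp only [scaledMHS, mhs_singleton, mul_sum]
  rw [sum_comm]
  refine sum_congr rfl fun l hl => ?_
  have hlp : l < p - 1 := mem_range.mp hl
  rw [primeDiv_sub_pow_eq_sum l.succ_pos (by lia), mul_sum]

lemma sum_primeDiv_pow_mul_primeDiv_pow_eq_sum_antidiagonal (a b : ℕ) :
    ∑ k ∈ range (p - 1), ∑ l ∈ range k,
        primeDiv p N (k - l) ^ (a + 1) * primeDiv p N (l + 1) ^ (b + 1)
      = ∑ q ∈ antidiagonal (a + b),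
        ((q.1.choose a + q.1.choose b : ℕ) : ZMod (p ^ N)) * scaledMHS p N [q.1 + 1, q.2 + 1] := by
  have hfrac : ∀ k ∈ range (p - 1), ∀ l ∈ range k,
      primeDiv p N (k - l) ^ (a + 1) * primeDiv p N (l + 1) ^ (b + 1)
        = ∑ q ∈ antidiagonal (a + b), primeDiv p N (k + 1) ^ (q.1 + 1)
          * (q.1.choose a * primeDiv p N (l + 1) ^ (q.2 + 1)
            + q.1.choose b * primeDiv p N (k - l) ^ (q.2 + 1)) := fun k hk l hl => by
    have hkp : k < p - 1 := mem_range.mp hk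
    have hlk : l < k := mem_range.mp hl
    have h := primeDiv_mul_primeDiv (p := p) (N := N) (Nat.sub_pos_of_lt hlk) l.succ_pos (by lia)
    rw [show k - l + (l + 1) = k + 1 by lia] at h
    exact pow_mul_pow_eq_sum_antidiagonal h a b
  rw [sum_congr rfl fun k hk => sum_congr rfl (hfrac k hk),
    sum_congr rfl fun k _ => sum_comm, sum_comm]
  refine sum_congr rfl fun q _ => ?_
  simp only [mul_add, sum_add_distrib, mul_left_comm _ (Nat.cast _ : ZMod (p ^ N)), ← mul_sum]
  rw [Nat.cast_add, add_mul]
  congr 2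
  · simp only [scaledMHS, mhs_pair, mul_sum]
  · simp only [scaledMHS, mhs_pair_eq_sum_reflect, mul_sum]

lemma sum_primeDiv_pow_mul_primeDiv_pow_eq_sum_range (a b : ℕ) :
    ∑ k ∈ range (p - 1), ∑ l ∈ range k,
        primeDiv p N (k - l) ^ (a + 1) * primeDiv p N (l + 1) ^ (b + 1)
      = (-1) ^ (b + 1) * ∑ k ∈ range N, (b + k).choose b * scaledMHS p N [b + 1 + k, a + 1] := by
  rw [sum_range_sum_range_sub_eq_reflect (p - 1)
    fun m n => primeDiv p N m ^ (a + 1) * primeDiv p N n ^ (b + 1)]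
  simp only [scaledMHS, mhs_pair, mul_sum]
  rw [sum_comm]
  refine sum_congr rfl fun l hl => ?_
  rw [sum_comm]
  refine sum_congr rfl fun k _ => ?_
  have hlp : l < p - 1 := mem_range.mp hl
  rw [show p - 1 - l = p - (l + 1) by lia, primeDiv_sub_pow_eq_sum l.succ_pos (by lia), mul_sum,
    mul_sum]
  exact sum_congr rfl fun i _ => by ring

lemma sum_antidiagonal_choose_mul_scaledMHS (a b : ℕ) :
    ∑ q ∈ antidiagonal (a + b),
        ((q.1.choose a + q.1.choose b : ℕ) : ZMod (p ^ N)) * scaledMHS p N [q.1 + 1, q.2 + 1]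
      = (-1) ^ (b + 1) * ∑ k ∈ range N, (b + k).choose b * scaledMHS p N [b + 1 + k, a + 1] := by
  rw [← sum_primeDiv_pow_mul_primeDiv_pow_eq_sum_antidiagonal,
    sum_primeDiv_pow_mul_primeDiv_pow_eq_sum_range]

lemma prod_one_sub_primeDiv {k : ℕ} (hk : k < p) :
    ∏ j ∈ range k, (1 - primeDiv p N (j + 1)) = (-1) ^ k * (p - 1).choose k := by
  induction k with
  | zero => simp
  | succ k ih =>
    have hp : p - 1 + 1 = p := Nat.sub_add_cancel (by lia)
    have habsorb : primeDiv p N (k + 1) * (p - 1).choose k = p.choose (k + 1) := by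
      apply eq_of_natCast_mul_eq k.succ_pos hk
      rw [← mul_assoc, natCast_mul_primeDiv k.succ_pos hk, mul_comm ((k + 1 : ℕ) : ZMod (p ^ N))]
      exact_mod_cast congrArg (Nat.cast (R := ZMod (p ^ N)))
        (hp ▸ Nat.add_one_mul_choose_eq (p - 1) k)
    have hPascal : (p.choose (k + 1) : ZMod (p ^ N))
        = (p - 1).choose k + (p - 1).choose (k + 1) := by
      rw [← Nat.cast_add, ← Nat.choose_succ_succ, Nat.succ_eq_add_one, hp]
    rw [prod_range_succ, ih (by lia)]
    linear_combination -(-1) ^ k * habsorb - (-1) ^ k * hPascal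

lemma sum_alternating_scaledMHS_one (hp : p ≠ 2) :
    ∑ i ∈ range (N + 1), (-1) ^ i * scaledMHS p N (1 :: List.replicate i 1) = 0 := by
  have heven : Even (p - 1) := (Fact.out : p.Prime).even_sub_one hp
  have hfull : ∏ j ∈ range (p - 1), (1 - primeDiv p N (j + 1)) = 1 := by
    rw [prod_one_sub_primeDiv (Nat.sub_lt (NeZero.pos p) one_pos), heven.neg_one_pow,
      Nat.choose_self, Nat.cast_one, one_mul]
  have htelescope := sum_range_sub' (fun k => ∏ j ∈ range k, (1 - primeDiv p N (j + 1))) (p - 1)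
  rw [hfull, prod_range_zero, sub_self] at htelescope
  rw [sum_alternating_scaledMHS_cons_replicate, ← htelescope]
  refine sum_congr rfl fun k _ => ?_
  rw [prod_range_succ]
  ring

lemma sum_alternating_scaledMHS_succ (s : ℕ) :
    ∑ i ∈ range (N + 1), (-1) ^ i * scaledMHS p N ((s + 1) :: List.replicate i 1)
      = ∑ i ∈ range (N + 1), (-1) ^ i * scaledMHS p N (s :: List.replicate i 1)
        + completeSum (primeDiv p N) s (p - 1) := by
  have htransform := sum_alternating_choose_mul_pow (x := fun m => (m : ZMod (p ^ N))⁻¹)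
    (n := p - 1) (Nat.sub_ne_zero_of_lt (Fact.out : p.Prime).one_lt)
    (fun m hm => by exact_mod_cast natCast_mul_inv_eq_one m.succ_pos (by lia)) s
  have hcomplete : completeSum (primeDiv p N) s (p - 1) = ∑ k ∈ range (p - 1),
      (-1) ^ k * (p - 1).choose (k + 1) * primeDiv p N (k + 1) ^ s := by
    calc completeSum (primeDiv p N) s (p - 1)
        = p ^ s * completeSum (fun m => (m : ZMod (p ^ N))⁻¹) s (p - 1) :=
          completeSum_const_mul _ _ _ _
      _ = _ := by
          rw [← htransform, mul_sum]
          exact sum_congr rfl fun k _ => by rw [primeDiv]; ring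
  rw [sum_alternating_scaledMHS_cons_replicate, sum_alternating_scaledMHS_cons_replicate,
    hcomplete, ← sum_add_distrib]
  refine sum_congr rfl fun k hk => ?_
  have hkp : k < p - 1 := mem_range.mp hk
  have hprod := prod_one_sub_primeDiv (p := p) (N := N) (show k + 1 < p by lia)
  rw [prod_range_succ] at hprod
  linear_combination -primeDiv p N (k + 1) ^ s * hprod

lemma sum_alternating_scaledMHS_eq_sum_completeSum (hp : p ≠ 2) (s : ℕ) :
    ∑ i ∈ range (N + 1), (-1) ^ i * scaledMHS p N ((s + 1) :: List.replicate i 1)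
      = ∑ j ∈ range s, completeSum (primeDiv p N) (j + 1) (p - 1) := by
  induction s with
  | zero => rw [sum_range_zero, zero_add, sum_alternating_scaledMHS_one hp]
  | succ s ih => rw [sum_alternating_scaledMHS_succ, ih, sum_range_succ]

lemma sum_range_inv_pow_eq_zero {s : ℕ} (hs : s ≠ 0) (hsp : s < p - 1) :
    ∑ k ∈ range (p - 1), ((k + 1 : ℕ) : ZMod p)⁻¹ ^ s = 0 := by
  have hinv : ∑ x : ZMod p, x⁻¹ ^ s = 0 := by
    rw [← FiniteField.sum_pow_lt_card_sub_one (ZMod p) s (by rwa [ZMod.card])]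
    exact Fintype.sum_equiv (Equiv.inv (ZMod p)) _ _ fun _ => rfl
  have hshift := sum_range_succ' (fun k : ℕ => (k : ZMod p)⁻¹ ^ s) (p - 1)
  rw [Nat.sub_add_cancel NeZero.one_le, sum_range_natCast_zmod p fun x => x⁻¹ ^ s, hinv,
    Nat.cast_zero, inv_zero, zero_pow hs, add_zero] at hshift
  exact hshift.symm

lemma natCast_dvd_sum_range_inv_pow {s : ℕ} (hs : s ≠ 0) (hsp : s < p - 1) :
    (p : ZMod (p ^ N)) ∣ ∑ k ∈ range (p - 1), ((k + 1 : ℕ) : ZMod (p ^ N))⁻¹ ^ s := by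
  rcases N.eq_zero_or_pos with rfl | hN
  · exact ⟨0, Subsingleton.elim (α := ZMod 1) _ _⟩
  set f := ZMod.castHom (dvd_pow_self p hN.ne') (ZMod p)
  have hinv : ∀ k ∈ range (p - 1),
      f ((k + 1 : ℕ) : ZMod (p ^ N))⁻¹ = ((k + 1 : ℕ) : ZMod p)⁻¹ := fun k hk => by
    apply eq_inv_of_mul_eq_one_right
    have hkp : k < p - 1 := mem_range.mp hk
    rw [← map_natCast f, ← map_mul, natCast_mul_inv_eq_one k.succ_pos (by lia), map_one]
  generalize ha : ∑ k ∈ range (p - 1), ((k + 1 : ℕ) : ZMod (p ^ N))⁻¹ ^ s = a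
  have hfa : f a = 0 := by
    rw [← ha, map_sum, ← sum_range_inv_pow_eq_zero hs hsp]
    exact sum_congr rfl fun k hk => by rw [map_pow, hinv k hk]
  rw [← ZMod.natCast_zmod_val a, map_natCast, ZMod.natCast_eq_zero_iff] at hfa
  rw [← ZMod.natCast_zmod_val a]
  exact Nat.cast_dvd_cast hfa

lemma pow_succ_dvd_scaledMHS {s : ℕ} (hs : s ≠ 0) (hsp : s < p - 1) :
    (p : ZMod (p ^ N)) ^ (s + 1) ∣ scaledMHS p N [s] := by
  rw [scaledMHS_eq_pow_mul, mhs_singleton, List.sum_singleton, pow_succ]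
  exact mul_dvd_mul_left _ (natCast_dvd_sum_range_inv_pow hs hsp)

end ZModPrimePow

section ModPrimePowSeven

variable {p : ℕ}

lemma two_mul_scaledMHS_two_two :
    2 * scaledMHS p 7 [2, 2] = scaledMHS p 7 [2] ^ 2 - scaledMHS p 7 [4] := by
  linear_combination -scaledMHS_mul_scaledMHS (p := p) (N := 7) 2 2

variable [Fact p.Prime]

lemma scaledMHS_six (hp : 8 < p) : scaledMHS p 7 [6] = 0 := by
  rw [← zero_dvd_iff, ← natCast_self_pow_eq_zero le_rfl]
  exact pow_succ_dvd_scaledMHS (by lia) (by lia)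

lemma scaledMHS_five (hp : 8 < p) : scaledMHS p 7 [5] = 0 := by
  have hreflect : scaledMHS p 7 [5] = -(scaledMHS p 7 [5] + 5 * scaledMHS p 7 [6]) := by
    simpa [sum_range_succ, Nat.choose, pow_succ, scaledMHS_eq_zero_of_le_sum]
      using scaledMHS_eq_sum_reflect (p := p) (N := 7) 4
  apply eq_of_natCast_mul_eq two_pos (by lia)
  push_cast
  linear_combination hreflect - 5 * scaledMHS_six hp

lemma two_mul_scaledMHS_three (hp : 8 < p) :
    2 * scaledMHS p 7 [3] = -3 * scaledMHS p 7 [4] := by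
  have hreflect : scaledMHS p 7 [3] = -(scaledMHS p 7 [3] + 3 * scaledMHS p 7 [4]
      + 6 * scaledMHS p 7 [5] + 10 * scaledMHS p 7 [6]) := by
    simpa [sum_range_succ, Nat.choose, pow_succ, scaledMHS_eq_zero_of_le_sum]
      using scaledMHS_eq_sum_reflect (p := p) (N := 7) 2
  linear_combination hreflect - 6 * scaledMHS_five hp - 10 * scaledMHS_six hp

lemma four_mul_scaledMHS_one (hp : 8 < p) :
    4 * scaledMHS p 7 [1] = scaledMHS p 7 [4] - 2 * scaledMHS p 7 [2] := by
  have hreflect : scaledMHS p 7 [1] = -(scaledMHS p 7 [1] + scaledMHS p 7 [2] + scaledMHS p 7 [3]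
      + scaledMHS p 7 [4] + scaledMHS p 7 [5] + scaledMHS p 7 [6]) := by
    simpa [sum_range_succ, pow_succ, scaledMHS_eq_zero_of_le_sum]
      using scaledMHS_eq_sum_reflect (p := p) (N := 7) 0
  linear_combination 2 * hreflect - two_mul_scaledMHS_three hp - 2 * scaledMHS_five hp
    - 2 * scaledMHS_six hp

lemma pow_three_dvd_scaledMHS_two (hp : 8 < p) : (p : ZMod (p ^ 7)) ^ 3 ∣ scaledMHS p 7 [2] :=
  pow_succ_dvd_scaledMHS two_ne_zero (by lia)

lemma pow_five_dvd_scaledMHS_four (hp : 8 < p) : (p : ZMod (p ^ 7)) ^ 5 ∣ scaledMHS p 7 [4] :=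
  pow_succ_dvd_scaledMHS four_ne_zero (by lia)

lemma pow_five_dvd_scaledMHS_three (hp : 8 < p) : (p : ZMod (p ^ 7)) ^ 5 ∣ scaledMHS p 7 [3] := by
  apply dvd_of_dvd_natCast_mul two_pos (by lia)
  rw [Nat.cast_ofNat, two_mul_scaledMHS_three hp]
  exact (pow_five_dvd_scaledMHS_four hp).mul_left _

lemma pow_three_dvd_scaledMHS_one (hp : 8 < p) : (p : ZMod (p ^ 7)) ^ 3 ∣ scaledMHS p 7 [1] := by
  apply dvd_of_dvd_natCast_mul four_pos (by lia)
  rw [Nat.cast_ofNat, four_mul_scaledMHS_one hp]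
  exact dvd_sub ((pow_dvd_pow _ (by lia)).trans (pow_five_dvd_scaledMHS_four hp))
    ((pow_three_dvd_scaledMHS_two hp).mul_left 2)

lemma four_mul_scaledMHS_one_sq (hp : 8 < p) :
    4 * scaledMHS p 7 [1] ^ 2 = scaledMHS p 7 [2] ^ 2 := by
  have h₄₁ : scaledMHS p 7 [4] * scaledMHS p 7 [1] = 0 := mul_eq_zero_of_pow_dvd (by lia)
    (pow_five_dvd_scaledMHS_four hp) (pow_three_dvd_scaledMHS_one hp)
  have h₄₂ : scaledMHS p 7 [4] * scaledMHS p 7 [2] = 0 := mul_eq_zero_of_pow_dvd (by lia)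
    (pow_five_dvd_scaledMHS_four hp) (pow_three_dvd_scaledMHS_two hp)
  apply eq_of_natCast_mul_eq two_pos (by lia)
  push_cast
  linear_combination (2 * scaledMHS p 7 [1] - scaledMHS p 7 [2]) * four_mul_scaledMHS_one hp
    + 2 * h₄₁ - h₄₂

lemma two_mul_scaledMHS_one_mul_two (hp : 8 < p) :
    2 * (scaledMHS p 7 [1] * scaledMHS p 7 [2]) = -scaledMHS p 7 [2] ^ 2 := by
  have h₄₂ : scaledMHS p 7 [4] * scaledMHS p 7 [2] = 0 := mul_eq_zero_of_pow_dvd (by lia)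
    (pow_five_dvd_scaledMHS_four hp) (pow_three_dvd_scaledMHS_two hp)
  apply eq_of_natCast_mul_eq two_pos (by lia)
  push_cast
  linear_combination scaledMHS p 7 [2] * four_mul_scaledMHS_one hp + h₄₂

lemma eight_mul_scaledMHS_one_one (hp : 8 < p) :
    8 * scaledMHS p 7 [1, 1] = scaledMHS p 7 [2] ^ 2 - 4 * scaledMHS p 7 [2] := by
  linear_combination four_mul_scaledMHS_one_sq hp
    - 4 * scaledMHS_mul_scaledMHS (p := p) (N := 7) 1 1

lemma scaledMHS_three_three (hp : 8 < p) : scaledMHS p 7 [3, 3] = 0 := by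
  have h₃₃ : scaledMHS p 7 [3] * scaledMHS p 7 [3] = 0 := mul_eq_zero_of_pow_dvd (by lia)
    (pow_five_dvd_scaledMHS_three hp) (pow_five_dvd_scaledMHS_three hp)
  apply eq_of_natCast_mul_eq two_pos (by lia)
  push_cast
  linear_combination h₃₃ - scaledMHS_mul_scaledMHS (p := p) (N := 7) 3 3 - scaledMHS_six hp

lemma scaledMHS_two_four (hp : 8 < p) : scaledMHS p 7 [2, 4] = -scaledMHS p 7 [4, 2] := by
  have h₂₄ : scaledMHS p 7 [2] * scaledMHS p 7 [4] = 0 := mul_eq_zero_of_pow_dvd (by lia)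
    (pow_three_dvd_scaledMHS_two hp) (pow_five_dvd_scaledMHS_four hp)
  linear_combination h₂₄ - scaledMHS_mul_scaledMHS (p := p) (N := 7) 2 4 - scaledMHS_six hp

lemma scaledMHS_five_one (hp : 8 < p) : scaledMHS p 7 [5, 1] = 0 := by
  have hstuffle := scaledMHS_mul_scaledMHS (p := p) (N := 7) 1 5
  have hshuffle : scaledMHS p 7 [1, 5] + scaledMHS p 7 [2, 4] + scaledMHS p 7 [3, 3]
      + scaledMHS p 7 [4, 2] + 2 * scaledMHS p 7 [5, 1] = -scaledMHS p 7 [5, 1] := by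
    simpa [Nat.sum_antidiagonal_eq_sum_range_succ_mk, sum_range_succ, Nat.choose,
      pow_succ, -Nat.cast_add, -Nat.choose_one_right, scaledMHS_eq_zero_of_le_sum]
      using sum_antidiagonal_choose_mul_scaledMHS (p := p) (N := 7) 0 4
  apply eq_of_natCast_mul_eq two_pos (by lia)
  push_cast
  linear_combination hshuffle + hstuffle - scaledMHS p 7 [1] * scaledMHS_five hp + scaledMHS_six hp
    - scaledMHS_two_four hp - scaledMHS_three_three hp

lemma scaledMHS_four_two (hp : 8 < p) : scaledMHS p 7 [4, 2] = 0 := by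
  have hshuffle : scaledMHS p 7 [2, 4] + 2 * scaledMHS p 7 [3, 3] + 4 * scaledMHS p 7 [4, 2]
      + 8 * scaledMHS p 7 [5, 1] = scaledMHS p 7 [4, 2] := by
    simpa [Nat.sum_antidiagonal_eq_sum_range_succ_mk, sum_range_succ, Nat.choose,
      pow_succ, -Nat.cast_add, -Nat.choose_one_right, scaledMHS_eq_zero_of_le_sum]
      using sum_antidiagonal_choose_mul_scaledMHS (p := p) (N := 7) 1 3
  apply eq_of_natCast_mul_eq two_pos (by lia)
  push_cast
  linear_combination hshuffle - scaledMHS_two_four hp - 2 * scaledMHS_three_three hp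
    - 8 * scaledMHS_five_one hp

lemma two_mul_scaledMHS_three_two (hp : 8 < p) :
    2 * scaledMHS p 7 [3, 2] = scaledMHS p 7 [2] ^ 2 - 5 * scaledMHS p 7 [4] := by
  have h₁₃ : scaledMHS p 7 [1] * scaledMHS p 7 [3] = 0 := mul_eq_zero_of_pow_dvd (by lia)
    (pow_three_dvd_scaledMHS_one hp) (pow_five_dvd_scaledMHS_three hp)
  have h₂₃ : scaledMHS p 7 [2] * scaledMHS p 7 [3] = 0 := mul_eq_zero_of_pow_dvd (by lia)
    (pow_three_dvd_scaledMHS_two hp) (pow_five_dvd_scaledMHS_three hp)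
  have hstuffle₁₃ := scaledMHS_mul_scaledMHS (p := p) (N := 7) 1 3
  have hstuffle₂₃ := scaledMHS_mul_scaledMHS (p := p) (N := 7) 2 3
  have hshuffle : scaledMHS p 7 [1, 3] + scaledMHS p 7 [2, 2] + 2 * scaledMHS p 7 [3, 1]
      = -(scaledMHS p 7 [1, 3] + scaledMHS p 7 [2, 3] + scaledMHS p 7 [3, 3]) := by
    simpa [Nat.sum_antidiagonal_eq_sum_range_succ_mk, sum_range_succ, Nat.choose,
      pow_succ, -Nat.cast_add, -Nat.choose_one_right, scaledMHS_eq_zero_of_le_sum]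
      using sum_antidiagonal_choose_mul_scaledMHS (p := p) (N := 7) 2 0
  linear_combination -2 * hshuffle - 4 * hstuffle₁₃ - 2 * hstuffle₂₃ + 4 * h₁₃ + 2 * h₂₃
    + two_mul_scaledMHS_two_two + 2 * scaledMHS_three_three hp - 2 * scaledMHS_five hp

lemma four_mul_scaledMHS_four_one (hp : 8 < p) :
    4 * scaledMHS p 7 [4, 1] = 5 * scaledMHS p 7 [4] - scaledMHS p 7 [2] ^ 2 := by
  have hshuffle : scaledMHS p 7 [2, 3] + 3 * scaledMHS p 7 [3, 2] + 6 * scaledMHS p 7 [4, 1]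
      = scaledMHS p 7 [2, 3] + 2 * scaledMHS p 7 [3, 3] := by
    simpa [Nat.sum_antidiagonal_eq_sum_range_succ_mk, sum_range_succ, Nat.choose,
      pow_succ, -Nat.cast_add, -Nat.choose_one_right, scaledMHS_eq_zero_of_le_sum]
      using sum_antidiagonal_choose_mul_scaledMHS (p := p) (N := 7) 2 1
  apply eq_of_natCast_mul_eq three_pos (by lia)
  push_cast
  linear_combination 2 * hshuffle - 3 * two_mul_scaledMHS_three_two hp
    + 4 * scaledMHS_three_three hp

lemma eight_mul_scaledMHS_three_one (hp : 8 < p) :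
    8 * scaledMHS p 7 [3, 1] = scaledMHS p 7 [2] ^ 2 - 9 * scaledMHS p 7 [4] := by
  have hshuffle : 2 * scaledMHS p 7 [2, 2] + 4 * scaledMHS p 7 [3, 1]
      = scaledMHS p 7 [2, 2] + 2 * scaledMHS p 7 [3, 2] + 3 * scaledMHS p 7 [4, 2] := by
    simpa [Nat.sum_antidiagonal_eq_sum_range_succ_mk, sum_range_succ, Nat.choose,
      pow_succ, -Nat.cast_add, -Nat.choose_one_right, scaledMHS_eq_zero_of_le_sum]
      using sum_antidiagonal_choose_mul_scaledMHS (p := p) (N := 7) 1 1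
  linear_combination 2 * hshuffle - two_mul_scaledMHS_two_two + 2 * two_mul_scaledMHS_three_two hp
    + 6 * scaledMHS_four_two hp

lemma eight_mul_scaledMHS_two_one (hp : 8 < p) : 8 * scaledMHS p 7 [2, 1]
    = 12 * scaledMHS p 7 [2] - scaledMHS p 7 [4] - 2 * scaledMHS p 7 [2] ^ 2 := by
  have hshuffle : 2 * scaledMHS p 7 [1, 1]
      = -(scaledMHS p 7 [1, 1] + scaledMHS p 7 [2, 1] + scaledMHS p 7 [3, 1]
        + scaledMHS p 7 [4, 1] + scaledMHS p 7 [5, 1]) := by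
    simpa [Nat.sum_antidiagonal_eq_sum_range_succ_mk, sum_range_succ,
      pow_succ, -Nat.cast_add, -Nat.choose_one_right, scaledMHS_eq_zero_of_le_sum]
      using sum_antidiagonal_choose_mul_scaledMHS (p := p) (N := 7) 0 0
  linear_combination 8 * hshuffle - 3 * eight_mul_scaledMHS_one_one hp
    - eight_mul_scaledMHS_three_one hp - 2 * four_mul_scaledMHS_four_one hp
    - 8 * scaledMHS_five_one hp

lemma eight_mul_scaledMHS_four_one_one (hp : 8 < p) :
    8 * scaledMHS p 7 [4, 1, 1] = -3 * scaledMHS p 7 [2] ^ 2 := by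
  have hcube : scaledMHS p 7 [1] * scaledMHS p 7 [1] ^ 2 = 0 := mul_eq_zero_of_pow_dvd (j := 6)
    (by lia) (pow_three_dvd_scaledMHS_one hp)
    (by simpa [← pow_mul] using pow_dvd_pow_of_dvd (pow_three_dvd_scaledMHS_one hp) 2)
  have hfour : scaledMHS p 7 [4] - scaledMHS p 7 [4, 1] + scaledMHS p 7 [4, 1, 1]
      = completeSum (primeDiv p 7) 1 (p - 1) + completeSum (primeDiv p 7) 2 (p - 1)
        + completeSum (primeDiv p 7) 3 (p - 1) := by
    simpa [sum_range_succ, scaledMHS_eq_zero_of_le_sum, sub_eq_add_neg]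
      using sum_alternating_scaledMHS_eq_sum_completeSum (p := p) (N := 7) (by lia) 3
  have hcomplete₁ : completeSum (primeDiv p 7) 1 (p - 1) = scaledMHS p 7 [1] :=
    completeSum_one _ _
  have hcomplete₂ : 2 * completeSum (primeDiv p 7) 2 (p - 1)
      = scaledMHS p 7 [1] ^ 2 + scaledMHS p 7 [2] :=
    two_mul_completeSum_two _ _
  have hcomplete₃ : 6 * completeSum (primeDiv p 7) 3 (p - 1) = scaledMHS p 7 [1] ^ 3
      + 3 * scaledMHS p 7 [1] * scaledMHS p 7 [2] + 2 * scaledMHS p 7 [3] :=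
    six_mul_completeSum_three _ _
  apply eq_of_natCast_mul_eq (show 0 < 6 by lia) (by lia)
  push_cast
  linear_combination 48 * hfour + 48 * hcomplete₁ + 24 * hcomplete₂ + 8 * hcomplete₃
    + 8 * hcube + 12 * four_mul_scaledMHS_four_one hp + 6 * four_mul_scaledMHS_one_sq hp
    + 12 * four_mul_scaledMHS_one hp + 12 * two_mul_scaledMHS_one_mul_two hp
    + 8 * two_mul_scaledMHS_three hp

lemma scaledMHS_relation_mod_prime_pow_seven (hp : 8 < p) :
    18 * scaledMHS p 7 [1] + 6 * scaledMHS p 7 [2, 1] - 3 * scaledMHS p 7 [4, 1]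
      - 2 * scaledMHS p 7 [4, 1, 1] = 0 := by
  apply eq_of_natCast_mul_eq (show 0 < 8 by lia) hp
  push_cast
  linear_combination 36 * four_mul_scaledMHS_one hp + 6 * eight_mul_scaledMHS_two_one hp
    - 6 * four_mul_scaledMHS_four_one hp - 2 * eight_mul_scaledMHS_four_one_one hp

end ModPrimePowSeven

section Padic

lemma MHS_eq_mhs (n : ℕ) (w : List ℕ) : MHS n w = mhs (fun m => 1 / (m : ℚ)) n w := by
  induction w generalizing n with
  | nil => rw [MHS, mhs_nil]
  | cons s w ih =>
    rw [MHS, mhs_cons, ← Ico_add_one_right_eq_Icc, sum_Ico_eq_sum_range, Nat.add_sub_cancel]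
    refine sum_congr rfl fun k _ => ?_
    rw [Nat.add_sub_cancel_left, ih, one_div_pow, add_comm 1 k]

variable {p : ℕ} [Fact p.Prime]

lemma exists_padicInt_eq_pow_mul_MHS (N : ℕ) (w : List ℕ) :
    ∃ y : ℤ_[p], (y : ℚ_[p]) = p ^ w.sum * (MHS (p - 1) w : ℚ)
      ∧ PadicInt.toZModPow N y = scaledMHS p N w := by
  have hlt {m : ℕ} (hmp : m ≤ p - 1) : m < p :=
    hmp.trans_lt (Nat.sub_lt (NeZero.pos p) one_pos)
  have hinv {m : ℕ} (hm : 0 < m) (hmp : m ≤ p - 1) : (m : ℤ_[p]) * (m : ℤ_[p]).inv = 1 :=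
    PadicInt.mul_inv <| PadicInt.norm_natCast_eq_one_iff.mpr <|
      Nat.coprime_of_lt_prime hm.ne' (hlt hmp) Fact.out
  refine ⟨mhs (fun m => p * (m : ℤ_[p]).inv) (p - 1) w, ?_, ?_⟩
  · change PadicInt.Coe.ringHom _ = _
    rw [MHS_eq_mhs, mhs_const_mul, map_mul, map_mhs, map_pow, map_natCast,
      ← eq_ratCast (Rat.castHom ℚ_[p]), map_mhs]
    congr 1
    refine mhs_congr (fun m hm hmp => ?_) w
    have h := congrArg PadicInt.Coe.ringHom (hinv hm hmp)
    rw [map_mul, map_one, map_natCast] at h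
    rw [eq_inv_of_mul_eq_one_right h, map_div₀, map_one, map_natCast, one_div]
  · rw [map_mhs]
    refine mhs_congr (fun m hm hmp => eq_of_natCast_mul_eq hm (hlt hmp) ?_) w
    have h := congrArg (PadicInt.toZModPow N) (hinv hm hmp)
    rw [map_mul, map_one, map_natCast] at h
    rw [natCast_mul_primeDiv hm (hlt hmp), map_mul, map_natCast, mul_left_comm, h, mul_one]

lemma norm_le_of_toZModPow_eq_zero {N : ℕ} {y : ℤ_[p]} (hy : PadicInt.toZModPow N y = 0) :
    ‖(y : ℚ_[p])‖ ≤ (p : ℝ) ^ (-N : ℤ) := by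
  rw [← PadicInt.norm_def, PadicInt.norm_le_pow_iff_mem_span_pow, ← PadicInt.ker_toZModPow]
  exact hy

lemma norm_le_of_toZModPow_succ_eq_zero {c N : ℕ} (hc : p.Coprime c)
    {x : ℚ_[p]} {y : ℤ_[p]} (hxy : (y : ℚ_[p]) = c * p * x)
    (hy : PadicInt.toZModPow (N + 1) y = 0) : ‖x‖ ≤ (p : ℝ) ^ (-N : ℤ) := by
  have hp : 0 < (p : ℝ) := Nat.cast_pos.mpr (NeZero.pos p)
  have hnorm : (p : ℝ)⁻¹ * ‖x‖ ≤ (p : ℝ)⁻¹ * (p : ℝ) ^ (-N : ℤ) :=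
    calc (p : ℝ)⁻¹ * ‖x‖ = ‖(y : ℚ_[p])‖ := by
          rw [hxy, norm_mul, norm_mul, Padic.norm_natCast_eq_one_iff.mpr hc, Padic.norm_p, one_mul]
      _ ≤ (p : ℝ) ^ (-(N + 1 : ℕ) : ℤ) := norm_le_of_toZModPow_eq_zero hy
      _ = (p : ℝ)⁻¹ * (p : ℝ) ^ (-N : ℤ) := by
          rw [← zpow_neg_one, ← zpow_add₀ hp.ne', Nat.cast_succ, neg_add_rev]
  exact le_of_mul_le_mul_left hnorm (inv_pos.mpr hp)

theorem weighted_wolstenholme_mod_p6_general (hp : 8 < p) :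
    ‖((MHS (p - 1) [1] + (1 / 3) * (p : ℚ) ^ 2 * MHS (p - 1) [2, 1]
        - (1 / 6) * (p : ℚ) ^ 4 * MHS (p - 1) [4, 1]
        - (1 / 9) * (p : ℚ) ^ 5 * MHS (p - 1) [4, 1, 1] : ℚ) : ℚ_[p])‖
      ≤ (p : ℝ) ^ (-6 : ℤ) := by
  obtain ⟨y₁, hy₁, hmod₁⟩ := exists_padicInt_eq_pow_mul_MHS (p := p) 7 [1]
  obtain ⟨y₂₁, hy₂₁, hmod₂₁⟩ := exists_padicInt_eq_pow_mul_MHS (p := p) 7 [2, 1]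
  obtain ⟨y₄₁, hy₄₁, hmod₄₁⟩ := exists_padicInt_eq_pow_mul_MHS (p := p) 7 [4, 1]
  obtain ⟨y₄₁₁, hy₄₁₁, hmod₄₁₁⟩ := exists_padicInt_eq_pow_mul_MHS (p := p) 7 [4, 1, 1]
  have hcoprime : p.Coprime 18 := Nat.Coprime.mul_right (m := 3) (n := 6)
    (Nat.coprime_of_lt_prime (by lia) (by lia) Fact.out)
    (Nat.coprime_of_lt_prime (by lia) (by lia) Fact.out)
  refine norm_le_of_toZModPow_succ_eq_zero (N := 6)
    (y := 18 * y₁ + 6 * y₂₁ - 3 * y₄₁ - 2 * y₄₁₁) hcoprime ?_ ?_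
  · change 18 * (y₁ : ℚ_[p]) + 6 * y₂₁ - 3 * y₄₁ - 2 * y₄₁₁ = _
    push_cast [hy₁, hy₂₁, hy₄₁, hy₄₁₁]
    simp only [List.sum_cons, List.sum_nil]
    ring
  · simp only [map_sub, map_add, map_mul, map_ofNat, hmod₁, hmod₂₁, hmod₄₁, hmod₄₁₁]
    exact scaledMHS_relation_mod_prime_pow_seven hp

end Padic

/-- There exists `N` such that for every prime `p ≥ N`, the `p`-adic valuation of
`H_{p-1}(1) + (1/3) p² H_{p-1}(2,1) - (1/6) p⁴ H_{p-1}(4,1) - (1/9) p⁵ H_{p-1}(4,1,1)`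
is at least `6`. -/
theorem weighted_wolstenholme_mod_p6 :
    ∃ N : ℕ, ∀ p : ℕ, (hp : p.Prime) → N ≤ p →
      haveI : Fact p.Prime := ⟨hp⟩
      ‖((MHS (p - 1) [1] + (1 / 3) * (p : ℚ) ^ 2 * MHS (p - 1) [2, 1]
          - (1 / 6) * (p : ℚ) ^ 4 * MHS (p - 1) [4, 1]
          - (1 / 9) * (p : ℚ) ^ 5 * MHS (p - 1) [4, 1, 1] : ℚ) : ℚ_[p])‖
        ≤ (p : ℝ) ^ (-6 : ℤ) :=
  ⟨9, fun _ hp hp9 => have : Fact _ := ⟨hp⟩; weighted_wolstenholme_mod_p6_general hp9⟩
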